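/- arXiv:1812.09967 — 3 statements merged into one kernel-verified Lean document; each statement's English description precedes it below -/
import Mathlib

section
/- For all integers k ≥ 2 and ℓ ≥ 1 and every real number α with α² ≠ 1, there exists a positive semidefinite matrix Ψ ∈ ℝ^{S×S}, where S is the vertex set of the (k,ℓ)-spider, such that ⟨Ψ, A^{(0)}⟩ = 1 + α^{2ℓ}/(2k) + (α^{2ℓ} − α²)/((k−1)(α² − 1)), ⟨Ψ, A^{(1)}⟩ = α, ⟨Ψ, A^{(d)}⟩ = 0 for every integer d with 1 < d < 2ℓ, and ⟨Ψ, A^{(2ℓ)}⟩ = ((1 − 1/k)/2)·α^{2ℓ}. -/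
/-!
Let `σᵢ` be the uniform probability vector on the sphere of radius `i` about the root. Two
independent random points of the spheres of radii `i` and `j` are at distance `|i - j|` with
probability `1/k` and at distance `i + j` otherwise, so, with `v²` standing for `v vᵀ`, sending `σᵢ`
to `xⁱ` turns `⟨v², A^{(d)}⟩` into the coefficients of the square of a polynomial, up to an error of
order `1/k`. The problem then becomes to write `1 + α x + (α x)^(2l) / 2` as a sum of squares, which
is done by
`½ (1 + z)² + ½ ∑_{j ≤ l - 2} (zʲ - z^(j + 2))² + ½ z^(2l - 2) = 1 + z + ½ z^(2l)`, `z = α x`.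

Put `Q = α² + α⁴ + ⋯ + α^(2l - 2)`. The errors of order `1/k` amount to `Q / k` at distance `0` and
`-Q / k` at distance `2`. The latter is cancelled by replacing the form `(σ₀ - α² σ₂)²` by
`σ₀² - 2 (1 - r) α² σ₀ σ₂ + α⁴ σ₂²` with `r α² = Q / k`, which is still positive semidefinite if
`r ≤ 2`, that is, if `Q ≤ 2 k α²`. If `Q > 2 k α²`, the prescribed trace is so large that all of `α`
can be put on a single edge. In both cases the surplus trace is placed on the root.
-/

/-- The vertex set of the `(k,ℓ)`-spider: the root (`none`) together with `k` paths
(arms) of length `ℓ`; `some (a, t)` is the vertex at distance `t+1` from the root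
on arm `a`. -/
abbrev Spider (k l : ℕ) := Option (Fin k × Fin l)

/-- The graph distance in the `(k,ℓ)`-spider tree. -/
def spiderDist {k l : ℕ} : Spider k l → Spider k l → ℕ
  | none, none => 0
  | none, some (_, t) => (t : ℕ) + 1
  | some (_, t), none => (t : ℕ) + 1
  | some (a, t), some (b, s) =>
      if a = b then Nat.dist (t : ℕ) (s : ℕ) else (t : ℕ) + (s : ℕ) + 2

/-- The distance-`d` adjacency matrix `A^{(d)}` of the `(k,ℓ)`-spider. -/
noncomputable def spiderA (k l d : ℕ) : Matrix (Spider k l) (Spider k l) ℝ :=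
  Matrix.of fun i j => if spiderDist i j = d then (1 : ℝ) else 0

/-- The Frobenius inner product `⟨B, C⟩ = Tr(Bᵀ C)`. -/
noncomputable def frob {n : Type*} [Fintype n] (B C : Matrix n n ℝ) : ℝ :=
  (B.transpose * C).trace

open Finset Matrix

/-- The unit mass at the distance `m`, as a function of the distance. -/
local notation "δ[" m "]" => (Pi.single m 1 : ℕ → ℝ)

lemma frob_add {n : Type*} [Fintype n] (B B' C : Matrix n n ℝ) :
    frob (B + B') C = frob B C + frob B' C := by
  simp [frob, add_mul]

lemma frob_smul {n : Type*} [Fintype n] (c : ℝ) (B C : Matrix n n ℝ) :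
    frob (c • B) C = c * frob B C := by
  simp [frob]

lemma frob_vecMulVec {n : Type*} [Fintype n] (v w : n → ℝ) (C : Matrix n n ℝ) :
    frob (vecMulVec v w) C = v ⬝ᵥ C *ᵥ w := by
  simp [frob, transpose_vecMulVec, vecMulVec_mul, trace_vecMulVec, dotProduct_comm,
    dotProduct_mulVec]

lemma geom_sum_Ico_one_div_le {x c : ℝ} (hx : 0 ≤ x) (hx1 : x ≠ 1) (hc : 1 < c) {n : ℕ}
    (hn : 1 ≤ n) : (∑ j ∈ Ico 1 n, x ^ j) / c ≤ (x ^ n - x) / ((c - 1) * (x - 1)) := by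
  calc (∑ j ∈ Ico 1 n, x ^ j) / c
    _ ≤ (∑ j ∈ Ico 1 n, x ^ j) / (c - 1) :=
      div_le_div_of_nonneg_left (sum_nonneg fun j _ ↦ pow_nonneg hx j) (sub_pos.mpr hc)
        (sub_one_lt c).le
    _ = (x ^ n - x) / ((c - 1) * (x - 1)) := by
      rw [geom_sum_Ico hx1 hn, pow_one, div_div, mul_comm (x - 1)]

lemma sum_range_second_difference {M : Type*} [AddCommGroup M] (g : ℕ → M) (n : ℕ) :
    ∑ j ∈ range n, (g j - 2 • g (j + 1) + g (j + 2)) = g 0 - g 1 - g n + g (n + 1) := by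
  calc ∑ j ∈ range n, (g j - 2 • g (j + 1) + g (j + 2))
    _ = ∑ j ∈ range n, ((g (j + 2) - g (j + 1)) - (g (j + 1) - g j)) :=
      sum_congr rfl fun j _ ↦ by abel
    _ = g 0 - g 1 - g n + g (n + 1) := by
      rw [sum_range_sub fun j ↦ g (j + 1) - g j]
      abel

namespace Spider

variable {k l : ℕ}

lemma spiderDist_self (p : Spider k l) : spiderDist p p = 0 := by
  rcases p with _ | ⟨a, t⟩ <;> simp [spiderDist]

lemma spiderDist_comm (p q : Spider k l) : spiderDist p q = spiderDist q p := by
  rcases p with _ | ⟨a, s⟩ <;> rcases q with _ | ⟨b, t⟩ <;> simp only [spiderDist]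
  grind [Nat.dist_comm]

lemma isSymm_spiderA (d : ℕ) : (spiderA k l d).IsSymm := by
  ext p q
  simp [spiderA, spiderDist_comm p q]

/-- The vertex at distance `t` from the root on the arm `a`. For `t = 0` it is the root, whatever
the arm, which spares a distinction of cases in `spiderDist_vertex`; for `t > l` the value is
junk. -/
def vertex (a : Fin k) : ℕ → Spider k l
  | 0 => none
  | t + 1 => if h : t < l then some (a, ⟨t, h⟩) else none

lemma spiderDist_vertex {i j : ℕ} (hi : i ≤ l) (hj : j ≤ l) (a b : Fin k) :
    spiderDist (vertex a i : Spider k l) (vertex b j) = if a = b then Nat.dist i j else i + j := by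
  rcases i with _ | i <;> rcases j with _ | j
  · simp [vertex, spiderDist]
  · simp [vertex, spiderDist, Nat.succ_le_iff.mp hj, Nat.dist]
  · simp [vertex, spiderDist, Nat.succ_le_iff.mp hi, Nat.dist]
  · simp only [vertex, Nat.succ_le_iff.mp hi, Nat.succ_le_iff.mp hj, dite_true, spiderDist,
      Nat.dist_succ_succ]
    grind

/-- The sequence of values at `v` and `w` of the bilinear forms of the matrices `A^{(d)}`. If `v`
and `w` are probability vectors, it is the distribution of the distance between two independent
random vertices with these laws. -/
noncomputable def distProfile : (Spider k l → ℝ) →ₗ[ℝ] (Spider k l → ℝ) →ₗ[ℝ] (ℕ → ℝ) :=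
  LinearMap.mk₂ ℝ (fun v w d ↦ v ⬝ᵥ spiderA k l d *ᵥ w)
    (fun _ _ _ ↦ by ext; simp) (fun _ _ _ ↦ by ext; simp)
    (fun _ _ _ ↦ by ext; simp [mulVec_add]) (fun _ _ _ ↦ by ext; simp [mulVec_smul])

lemma distProfile_apply (v w : Spider k l → ℝ) (d : ℕ) :
    distProfile v w d = v ⬝ᵥ spiderA k l d *ᵥ w := rfl

lemma distProfile_comm (v w : Spider k l → ℝ) : distProfile v w = distProfile w v := by
  ext d
  rw [distProfile_apply, distProfile_apply, dotProduct_mulVec, dotProduct_comm,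
    ← mulVec_transpose, isSymm_spiderA d]

lemma distProfile_single_single (p q : Spider k l) :
    distProfile (Pi.single p 1) (Pi.single q 1) = δ[spiderDist p q] := by
  ext d
  simp [distProfile_apply, spiderA, Pi.single_apply, eq_comm]

/-- The uniform probability vector on the sphere of radius `t` about the root, for `1 ≤ k` and
`t ≤ l`. -/
noncomputable def sphereMean (k l t : ℕ) : Spider k l → ℝ :=
  (k : ℝ)⁻¹ • ∑ a : Fin k, Pi.single (vertex a t) 1

/-- The distribution of the distance between independent random points of the spheres of radii `i`
and `j`: with probability `1/k` they lie on the same arm. -/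
noncomputable def sphereProfile (k i j : ℕ) : ℕ → ℝ :=
  (k : ℝ)⁻¹ • δ[Nat.dist i j] + (1 - (k : ℝ)⁻¹) • δ[i + j]

lemma distProfile_sphereMean (hk : 1 ≤ k) {i j : ℕ} (hi : i ≤ l) (hj : j ≤ l) :
    distProfile (sphereMean k l i) (sphereMean k l j) = sphereProfile k i j := by
  have hk0 : (k : ℝ) ≠ 0 := by positivity
  have inner_sum (b : Fin k) :
      ∑ a : Fin k, δ[if a = b then Nat.dist i j else i + j]
        = δ[Nat.dist i j] + ((k : ℝ) - 1) • δ[i + j] := by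
    rw [← add_sum_erase _ _ (mem_univ b), if_pos rfl,
      sum_congr rfl fun a ha ↦ by rw [if_neg (ne_of_mem_erase ha)]]
    simp [card_erase_of_mem, ← Nat.cast_smul_eq_nsmul ℝ, Nat.cast_sub hk]
  simp only [sphereMean, map_smul, map_sum, LinearMap.smul_apply, LinearMap.sum_apply,
    distProfile_single_single, spiderDist_vertex hi hj, inner_sum, sphereProfile, sum_const,
    card_univ, Fintype.card_fin, ← Nat.cast_smul_eq_nsmul ℝ]
  match_scalars <;> field_simp

@[simp]
lemma sphereProfile_zero_left (k j : ℕ) : sphereProfile k 0 j = δ[j] := by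
  simp only [sphereProfile, Nat.dist_zero_left, zero_add]
  module

lemma sphereProfile_self (k i : ℕ) :
    sphereProfile k i i = (k : ℝ)⁻¹ • δ[0] + (1 - (k : ℝ)⁻¹) • δ[2 * i] := by
  rw [sphereProfile, Nat.dist_self, two_mul]

lemma sphereProfile_add_two (k j : ℕ) :
    sphereProfile k j (j + 2) = sphereProfile k (j + 1) (j + 1) + (k : ℝ)⁻¹ • (δ[2] - δ[0]) := by
  have hdist : Nat.dist j (j + 2) = 2 := by simp [Nat.dist]
  have hsum : 2 * (j + 1) = j + (j + 2) := by ring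
  rw [sphereProfile_self, sphereProfile, hdist, hsum]
  module

/-- The sequence `φ` is of the form `d ↦ ⟨Ψ, A^{(d)}⟩` for a positive semidefinite `Ψ`. -/
def IsPosSemidefProfile (k l : ℕ) (φ : ℕ → ℝ) : Prop :=
  ∃ Ψ : Matrix (Spider k l) (Spider k l) ℝ, Ψ.PosSemidef ∧ ∀ d, frob Ψ (spiderA k l d) = φ d

lemma isPosSemidefProfile_distProfile_self (v : Spider k l → ℝ) :
    IsPosSemidefProfile k l (distProfile v v) :=
  ⟨vecMulVec v v, by simpa using posSemidef_vecMulVec_self_star v,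
    fun d ↦ frob_vecMulVec v v (spiderA k l d)⟩

namespace IsPosSemidefProfile

lemma add {φ ψ : ℕ → ℝ} (hφ : IsPosSemidefProfile k l φ) (hψ : IsPosSemidefProfile k l ψ) :
    IsPosSemidefProfile k l (φ + ψ) := by
  obtain ⟨Φ, hΦ, hΦφ⟩ := hφ
  obtain ⟨Ψ, hΨ, hΨψ⟩ := hψ
  exact ⟨Φ + Ψ, hΦ.add hΨ, fun d ↦ by simp [frob_add, hΦφ, hΨψ]⟩

lemma smul {c : ℝ} {φ : ℕ → ℝ} (hc : 0 ≤ c) (hφ : IsPosSemidefProfile k l φ) :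
    IsPosSemidefProfile k l (c • φ) := by
  obtain ⟨Φ, hΦ, hΦφ⟩ := hφ
  exact ⟨c • Φ, hΦ.smul hc, fun d ↦ by simp [frob_smul, hΦφ]⟩

lemma sum {ι : Type*} {s : Finset ι} {φ : ι → ℕ → ℝ}
    (hφ : ∀ i ∈ s, IsPosSemidefProfile k l (φ i)) :
    IsPosSemidefProfile k l (∑ i ∈ s, φ i) := by
  refine sum_induction φ (IsPosSemidefProfile k l) (fun _ _ ↦ .add) ?_ hφ
  simpa using isPosSemidefProfile_distProfile_self (0 : Spider k l → ℝ)

end IsPosSemidefProfile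

/-- `x² v² + 2 s x y v w + y² w² = (x v + s y w)² + (1 - s²) (y w)²`. -/
lemma isPosSemidefProfile_of_sq_le_one (v w : Spider k l → ℝ) (x y : ℝ) {s : ℝ} (hs : s ^ 2 ≤ 1) :
    IsPosSemidefProfile k l
      (x ^ 2 • distProfile v v + (2 * s * x * y) • distProfile v w + y ^ 2 • distProfile w w) := by
  convert (isPosSemidefProfile_distProfile_self (x • v + (s * y) • w)).add
    ((isPosSemidefProfile_distProfile_self (y • w)).smul (sub_nonneg.mpr hs)) using 1
  simp only [map_add, map_smul, LinearMap.add_apply, LinearMap.smul_apply, distProfile_comm w v]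
  module

lemma isPosSemidefProfile_vertices (p q : Spider k l) (x y : ℝ) :
    IsPosSemidefProfile k l ((x ^ 2 + y ^ 2) • δ[0] + (2 * x * y) • δ[spiderDist p q]) := by
  convert isPosSemidefProfile_of_sq_le_one (Pi.single p 1) (Pi.single q 1) x y (one_pow 2).le
    using 1
  simp only [distProfile_single_single, spiderDist_self]
  module

lemma isPosSemidefProfile_spheres (hk : 1 ≤ k) {i j : ℕ} (hi : i ≤ l) (hj : j ≤ l) (x y : ℝ)
    {s : ℝ} (hs : s ^ 2 ≤ 1) :
    IsPosSemidefProfile k l (x ^ 2 • sphereProfile k i i + (2 * s * x * y) • sphereProfile k i j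
      + y ^ 2 • sphereProfile k j j) := by
  simpa only [distProfile_sphereMean hk, hi, hj] using
    isPosSemidefProfile_of_sq_le_one (sphereMean k l i) (sphereMean k l j) x y hs

lemma isPosSemidefProfile_sphere (hk : 1 ≤ k) {i : ℕ} (hi : i ≤ l) :
    IsPosSemidefProfile k l (sphereProfile k i i) :=
  distProfile_sphereMean hk hi hi ▸ isPosSemidefProfile_distProfile_self (sphereMean k l i)

lemma isPosSemidefProfile_single_zero : IsPosSemidefProfile k l δ[0] := by
  simpa using isPosSemidefProfile_vertices (none : Spider k l) none 1 0

lemma sum_sphereProfile_second_difference (k n : ℕ) (x : ℝ) :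
    ∑ j ∈ range n, (x ^ j • sphereProfile k j j - (2 * x ^ (j + 1)) • sphereProfile k j (j + 2)
        + x ^ (j + 2) • sphereProfile k (j + 2) (j + 2))
      = δ[0] - x • sphereProfile k 1 1 - x ^ n • sphereProfile k n n
        + x ^ (n + 1) • sphereProfile k (n + 1) (n + 1)
        + (2 * ((∑ j ∈ range n, x ^ (j + 1)) / k)) • (δ[0] - δ[2]) := by
  have term_eq (j : ℕ) : x ^ j • sphereProfile k j j
        - (2 * x ^ (j + 1)) • sphereProfile k j (j + 2)
        + x ^ (j + 2) • sphereProfile k (j + 2) (j + 2)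
      = (x ^ j • sphereProfile k j j - 2 • (x ^ (j + 1) • sphereProfile k (j + 1) (j + 1))
        + x ^ (j + 2) • sphereProfile k (j + 2) (j + 2))
        + (2 * (x ^ (j + 1) / k)) • (δ[0] - δ[2]) := by
    rw [sphereProfile_add_two]
    module
  rw [sum_congr rfl fun j _ ↦ term_eq j, sum_add_distrib,
    sum_range_second_difference fun j ↦ x ^ j • sphereProfile k j j, ← sum_smul, ← mul_sum,
    ← sum_div]
  simp

/-- Relaxing the coefficient `-2` of `z ^ (j + 1)` for `j = 0` alone affects no other distance than
`2`, because `σ₀` is the mass at the root. -/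
lemma sum_sphereProfile_relaxed {n : ℕ} {x r : ℝ}
    (hr : r * x = (∑ j ∈ range n, x ^ (j + 1)) / k) :
    ∑ j ∈ range n, (x ^ j • sphereProfile k j j
        + (2 * ((if j = 0 then r else 0) - 1) * x ^ (j + 1)) • sphereProfile k j (j + 2)
        + x ^ (j + 2) • sphereProfile k (j + 2) (j + 2))
      = (1 + 2 * ((∑ j ∈ range n, x ^ (j + 1)) / k)) • δ[0] - x • sphereProfile k 1 1
        - x ^ n • sphereProfile k n n + x ^ (n + 1) • sphereProfile k (n + 1) (n + 1) := by
  have correction :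
      ∑ j ∈ range n, (if j = 0 then 2 * r * x else 0) • sphereProfile k j (j + 2)
        = (2 * ((∑ j ∈ range n, x ^ (j + 1)) / k)) • δ[2] := by
    rw [← hr]
    rcases n with _ | n
    · rw [hr]
      simp
    · simp [mul_assoc]
  have split_correction (j : ℕ) : x ^ j • sphereProfile k j j
        + (2 * ((if j = 0 then r else 0) - 1) * x ^ (j + 1)) • sphereProfile k j (j + 2)
        + x ^ (j + 2) • sphereProfile k (j + 2) (j + 2)
      = (x ^ j • sphereProfile k j j - (2 * x ^ (j + 1)) • sphereProfile k j (j + 2)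
        + x ^ (j + 2) • sphereProfile k (j + 2) (j + 2))
        + (if j = 0 then 2 * r * x else 0) • sphereProfile k j (j + 2) := by
    split_ifs with hj
    · subst hj
      module
    · module
  rw [sum_congr rfl fun j _ ↦ split_correction j, sum_add_distrib, correction,
    sum_sphereProfile_second_difference]
  module

lemma isPosSemidefProfile_chain (hk : 1 ≤ k) (n : ℕ) (α : ℝ) {r : ℝ} (hr : 0 ≤ r) (hr' : r ≤ 2)
    (hrα : r * α ^ 2 = (∑ j ∈ range n, (α ^ 2) ^ (j + 1)) / k) :
    IsPosSemidefProfile k (n + 1) ((1 + (∑ j ∈ range n, (α ^ 2) ^ (j + 1)) / k) • δ[0] + α • δ[1]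
      + ((α ^ 2) ^ (n + 1) / 2) • sphereProfile k (n + 1) (n + 1)) := by
  have coeff_sq (j : ℕ) : ((if j = 0 then r else 0) - 1) ^ 2 ≤ 1 := by
    rw [sq_le_one_iff_abs_le_one, abs_le]
    constructor <;> split_ifs <;> linarith
  have first := isPosSemidefProfile_spheres (l := n + 1) hk (Nat.zero_le _) (Nat.le_add_left 1 n)
    1 α (one_pow 2).le
  have middle (j : ℕ) (hj : j ∈ range n) : IsPosSemidefProfile k (n + 1)
      ((α ^ 2) ^ j • sphereProfile k j j
        + (2 * ((if j = 0 then r else 0) - 1) * (α ^ 2) ^ (j + 1)) • sphereProfile k j (j + 2)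
        + (α ^ 2) ^ (j + 2) • sphereProfile k (j + 2) (j + 2)) := by
    have hjn := mem_range.mp hj
    convert isPosSemidefProfile_spheres (l := n + 1) (i := j) (j := j + 2) hk (by omega) (by omega)
      (α ^ j) (α ^ (j + 2)) (coeff_sq j) using 1
    module
  have last := (isPosSemidefProfile_sphere hk (Nat.le_succ n)).smul (pow_nonneg (sq_nonneg α) n)
  convert ((first.add (.sum middle)).add last).smul (one_half_pos (α := ℝ)).le using 1
  rw [sum_sphereProfile_relaxed hrα]
  simp only [sphereProfile_zero_left]
  module

lemma isPosSemidefProfile_edge (hk : 1 ≤ k) (hl : 1 ≤ l) (α : ℝ) :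
    IsPosSemidefProfile k l (((1 + α ^ 2) / 2) • δ[0] + α • δ[1]) := by
  convert (isPosSemidefProfile_vertices (none : Spider k l) (some (⟨0, hk⟩, ⟨0, hl⟩)) 1 α).smul
    (one_half_pos (α := ℝ)).le using 1
  simp only [spiderDist]
  module

lemma isPosSemidefProfile_of_le (hk : 1 ≤ k) (hl : 1 ≤ l) {α T : ℝ}
    (hT : 1 + α ^ (2 * l) / (2 * k) + (∑ j ∈ Ico 1 l, (α ^ 2) ^ j) / k ≤ T) :
    IsPosSemidefProfile k l
      (T • δ[0] + α • δ[1] + ((1 - 1 / (k : ℝ)) / 2 * α ^ (2 * l)) • δ[2 * l]) := by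
  obtain ⟨n, rfl⟩ := Nat.exists_eq_add_of_le' hl
  set Q := ∑ j ∈ range n, (α ^ 2) ^ (j + 1) with hQ
  have hk0 : (0 : ℝ) < k := by positivity
  have hQ0 : 0 ≤ Q := sum_nonneg fun j _ ↦ by positivity
  rw [sum_Ico_eq_sum_range, Nat.add_sub_cancel, sum_congr rfl fun j _ ↦ by rw [add_comm 1 j],
    ← hQ, pow_mul] at hT
  suffices ∃ c ≤ 1 + Q / k, IsPosSemidefProfile k (n + 1) (c • δ[0] + α • δ[1]
      + ((α ^ 2) ^ (n + 1) / 2) • sphereProfile k (n + 1) (n + 1)) by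
    obtain ⟨c, hc, h⟩ := this
    have surplus_nonneg : 0 ≤ T - c - (α ^ 2) ^ (n + 1) / (2 * k) := by linarith
    convert h.add (isPosSemidefProfile_single_zero.smul surplus_nonneg) using 1
    rw [sphereProfile_self, pow_mul]
    module
  rcases le_or_gt Q (2 * k * α ^ 2) with hQα | hQα
  · refine ⟨_, le_rfl, isPosSemidefProfile_chain hk n α (r := Q / k / α ^ 2) (by positivity) ?_ ?_⟩
    · exact div_le_of_le_mul₀ (sq_nonneg α) zero_le_two (by rw [div_le_iff₀ hk0]; linarith)
    · exact div_mul_cancel_of_imp fun hα ↦ by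
        rw [le_antisymm (by simpa [hα] using hQα) hQ0, zero_div]
  · refine ⟨(1 + α ^ 2) / 2, ?_, (isPosSemidefProfile_edge hk hl α).add
      ((isPosSemidefProfile_sphere hk le_rfl).smul (by positivity))⟩
    have : 2 * α ^ 2 < Q / k := by rw [lt_div_iff₀ hk0]; linarith
    linarith [sq_nonneg α]

end Spider

theorem spider_technical_general (k l : ℕ) (hk : 1 ≤ k) (hl : 1 ≤ l) (α T : ℝ)
    (hT : 1 + α ^ (2 * l) / (2 * (k : ℝ)) + (∑ j ∈ Ico 1 l, (α ^ 2) ^ j) / k ≤ T) :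
    ∃ Ψ : Matrix (Spider k l) (Spider k l) ℝ, Ψ.PosSemidef ∧
      frob Ψ (spiderA k l 0) = T ∧
      frob Ψ (spiderA k l 1) = α ∧
      (∀ d : ℕ, 1 < d → d < 2 * l → frob Ψ (spiderA k l d) = 0) ∧
      frob Ψ (spiderA k l (2 * l)) = ((1 - 1 / (k : ℝ)) / 2) * α ^ (2 * l) := by
  obtain ⟨Ψ, hΨ, hΨd⟩ := Spider.isPosSemidefProfile_of_le hk hl hT
  refine ⟨Ψ, hΨ, ?_, ?_, fun d hd hdl ↦ ?_, ?_⟩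
  all_goals
    simp only [hΨd, Pi.add_apply, Pi.smul_apply, Pi.single_apply, smul_eq_mul]
    grind

theorem spider_technical (k l : ℕ) (hk : 2 ≤ k) (hl : 1 ≤ l) (α : ℝ) (hα : α ^ 2 ≠ 1) :
    ∃ Ψ : Matrix (Spider k l) (Spider k l) ℝ, Ψ.PosSemidef ∧
      frob Ψ (spiderA k l 0)
        = 1 + α ^ (2 * l) / (2 * (k : ℝ))
            + (α ^ (2 * l) - α ^ 2) / (((k : ℝ) - 1) * (α ^ 2 - 1)) ∧
      frob Ψ (spiderA k l 1) = α ∧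
      (∀ d : ℕ, 1 < d → d < 2 * l → frob Ψ (spiderA k l d) = 0) ∧
      frob Ψ (spiderA k l (2 * l)) = ((1 - 1 / (k : ℝ)) / 2) * α ^ (2 * l) := by
  have hsum : (∑ j ∈ Ico 1 l, (α ^ 2) ^ j) / (k : ℝ)
      ≤ (α ^ (2 * l) - α ^ 2) / (((k : ℝ) - 1) * (α ^ 2 - 1)) :=
    pow_mul α 2 l ▸ geom_sum_Ico_one_div_le (sq_nonneg α) hα (by exact_mod_cast hk) hl
  exact spider_technical_general k l (by omega) hl α _ (by gcongr)
end

section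
/- For all integers ℓ ≥ 1 and k ≥ 3^ℓ, there exists a positive semidefinite matrix Ψ ∈ ℝ^{S×S}, where S is the vertex set of the (k,ℓ)-spider, such that 3/2 ≤ ⟨Ψ, A^{(0)}⟩ ≤ 2, ⟨Ψ, A^{(1)}⟩ = k^{1/(2ℓ)}, ⟨Ψ, A^{(d)}⟩ = 0 for every integer d with 1 < d < 2ℓ, and ⟨Ψ, A^{(2ℓ)}⟩ = (k−1)/2. -/
open Finset Matrix

section Frob

variable {n ι : Type*} [Fintype n]

lemma frob_add_left (B B' C : Matrix n n ℝ) : frob (B + B') C = frob B C + frob B' C := by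
  simp [frob, Matrix.add_mul]

lemma frob_smul_left (c : ℝ) (B C : Matrix n n ℝ) : frob (c • B) C = c * frob B C := by
  simp [frob]

lemma frob_sum_left (s : Finset ι) (B : ι → Matrix n n ℝ) (C : Matrix n n ℝ) :
    frob (∑ i ∈ s, B i) C = ∑ i ∈ s, frob (B i) C := by
  simp [frob, transpose_sum, Matrix.sum_mul, trace_sum]

lemma frob_vecMulVec_s1 [DecidableEq n] (u v : n → ℝ) (C : Matrix n n ℝ) :
    frob (vecMulVec u v) C = toBilin' C u v := by
  rw [frob, transpose_vecMulVec, vecMulVec_mul, trace_vecMulVec, toBilin'_apply',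
    dotProduct_mulVec, dotProduct_comm]

end Frob

section ChainGram

variable {n : Type*}

/-- The sum of squares `u uᵀ` that yields the witness `Ψ` when `e` is the sequence of radial vectors
of the spider.  When `e` vanishes beyond `l`, its coefficients on `e 1, …, e l` are `1 / 2` on the
diagonal and `-1 / 4` two steps off it; the parameter `w` tunes the coefficient of the cross term
of `e 0` and `e 2`. -/
noncomputable def chainGram (e : ℕ → n → ℝ) (l : ℕ) (w : ℝ) : Matrix n n ℝ :=
  let sq := fun u : n → ℝ => vecMulVec u u
  (1 / 4 : ℝ) • (∑ t ∈ range l, sq (e (t + 1) - e (t + 3)) +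
    sq (e 1 + (2 : ℝ) • e 0) + sq (e 2 - (1 - w) • e 0))

lemma posSemidef_chainGram [Finite n] (e : ℕ → n → ℝ) (l : ℕ) (w : ℝ) :
    (chainGram e l w).PosSemidef := by
  have posSemidef_sq (u : n → ℝ) : (vecMulVec u u).PosSemidef := by
    simpa using posSemidef_vecMulVec_self_star u
  exact (((posSemidef_sum _ fun _ _ => posSemidef_sq _).add (posSemidef_sq _)).add
    (posSemidef_sq _)).smul (by norm_num)

lemma frob_chainGram [Fintype n] [DecidableEq n] {A : Matrix n n ℝ} (hA : A.IsSymm)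
    {e : ℕ → n → ℝ} {l : ℕ} (he₁ : e (l + 1) = 0) (he₂ : e (l + 2) = 0) (w : ℝ) :
    frob (chainGram e l w) A =
      1 / 2 * ∑ t ∈ range l,
        (toBilin' A (e (t + 1)) (e (t + 1)) - toBilin' A (e t) (e (t + 2))) +
      toBilin' A (e 0) (e 1) + w / 2 * toBilin' A (e 0) (e 2) +
      (1 + (1 - w) ^ 2 / 4) * toBilin' A (e 0) (e 0) := by
  have diag_shift := sum_range_sub (fun t =>
    toBilin' A (e (t + 1)) (e (t + 1)) + toBilin' A (e (t + 2)) (e (t + 2))) l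
  have off_shift := sum_range_sub (fun t => toBilin' A (e t) (e (t + 2))) l
  have symm (u v : n → ℝ) : toBilin' A u v = toBilin' A v u :=
    (isSymm_toBilin'_iff_isSymm.mpr hA).eq u v
  simp only [he₁, he₂, map_zero, zero_add, sum_sub_distrib, sum_add_distrib, add_assoc,
    Nat.reduceAdd] at diag_shift off_shift
  simp only [chainGram, frob_smul_left, frob_add_left, frob_sum_left, frob_vecMulVec_s1, map_add,
    map_sub, map_smul, LinearMap.add_apply, LinearMap.sub_apply, LinearMap.smul_apply, smul_eq_mul,
    sum_sub_distrib, symm (e 1) (e 0), symm (e 2) (e 0), fun t => symm (e (t + 3)) (e (t + 1))]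
  linear_combination (1 / 4 : ℝ) * diag_shift - (1 / 2 : ℝ) * off_shift

end ChainGram

section RadialVec

variable {k l : ℕ}

lemma spiderDist_comm (i j : Spider k l) : spiderDist i j = spiderDist j i := by
  rcases i with _ | ⟨a, t⟩ <;> rcases j with _ | ⟨b, s⟩ <;> simp only [spiderDist]
  rw [Nat.dist_comm, Nat.add_comm (t : ℕ) s]
  simp only [eq_comm]

lemma isSymm_spiderA (k l d : ℕ) : (spiderA k l d).IsSymm :=
  IsSymm.ext fun i j => by simp only [spiderA, of_apply, spiderDist_comm]

/-- The vertex at distance `t` from the root on arm `a`; for `t = 0` it is the root, which lies on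
every arm. -/
def armVertex (a : Fin k) (t : Fin (l + 1)) : Spider k l :=
  Fin.cases none (fun s => some (a, s)) t

lemma spiderDist_armVertex (a b : Fin k) (t s : Fin (l + 1)) :
    spiderDist (armVertex a t) (armVertex b s) = if a = b then Nat.dist t s else t + s := by
  cases t using Fin.cases <;> cases s using Fin.cases
  · simp [armVertex, spiderDist]
  · simp [armVertex, spiderDist, Nat.dist]
  · simp [armVertex, spiderDist, Nat.dist]
  · simp only [armVertex, Fin.cases_succ, spiderDist, Fin.val_succ, Nat.dist_add_add_right]
    grind

/-- `r ^ t` times the average over the arms of the unit vectors at distance `t` from the root.  It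
is extended by zero to `t > l`, where the spider has no vertices.  With `r ^ (2 * l) = k` these are
the vectors that span the witness `Ψ`. -/
noncomputable def radialVec (k l : ℕ) (r : ℝ) (t : ℕ) : Spider k l → ℝ :=
  if h : t < l + 1 then (r ^ t / k) • ∑ a : Fin k, Pi.single (armVertex a ⟨t, h⟩) 1 else 0

lemma radialVec_eq_zero (k : ℕ) (r : ℝ) {t : ℕ} (ht : l < t) : radialVec k l r t = 0 :=
  dif_neg (by omega)

lemma sum_sum_ite_eq_const {ι R : Type*} [Fintype ι] [DecidableEq ι] [CommRing R] (x y : R) :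
    ∑ a : ι, ∑ b : ι, (if a = b then x else y) =
      Fintype.card ι * (x + (Fintype.card ι - 1) * y) := by
  have split_ite (a b : ι) : (if a = b then x else y) = (if a = b then x - y else 0) + y := by
    split_ifs <;> ring
  simp only [split_ite, sum_add_distrib, sum_ite_eq, mem_univ, if_true, sum_const, card_univ,
    nsmul_eq_mul]
  ring

lemma toBilin'_spiderA_radialVec (hk : k ≠ 0) (d : ℕ) (r : ℝ) {t s : ℕ} (ht : t ≤ l) (hs : s ≤ l) :
    toBilin' (spiderA k l d) (radialVec k l r t) (radialVec k l r s) =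
      r ^ (t + s) / k *
        ((if d = Nat.dist t s then 1 else 0) + (k - 1) * (if d = t + s then 1 else 0)) := by
  have entry (a b : Fin k) :
      toBilin' (spiderA k l d) (Pi.single (armVertex a ⟨t, Nat.lt_succ_of_le ht⟩) 1)
        (Pi.single (armVertex b ⟨s, Nat.lt_succ_of_le hs⟩) 1) =
      if a = b then (if d = Nat.dist t s then 1 else 0) else (if d = t + s then 1 else 0) := by
    simp only [toBilin'_single, spiderA, of_apply, spiderDist_armVertex, eq_comm (b := d)]
    split_ifs <;> rfl
  have hk' : (k : ℝ) ≠ 0 := Nat.cast_ne_zero.mpr hk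
  simp only [radialVec, dif_pos (Nat.lt_succ_of_le ht), dif_pos (Nat.lt_succ_of_le hs), map_smul,
    map_sum, LinearMap.smul_apply, LinearMap.sum_apply, smul_eq_mul, entry, ← mul_sum]
  rw [sum_comm, sum_sum_ite_eq_const, Fintype.card_fin]
  field_simp
  ring

lemma toBilin'_spiderA_radialVec_zero (hk : k ≠ 0) (d : ℕ) (r : ℝ) {s : ℕ} (hs : s ≤ l) :
    toBilin' (spiderA k l d) (radialVec k l r 0) (radialVec k l r s) =
      if d = s then r ^ s else 0 := by
  have hk' : (k : ℝ) ≠ 0 := Nat.cast_ne_zero.mpr hk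
  rw [toBilin'_spiderA_radialVec hk d r (Nat.zero_le l) hs, Nat.dist_eq_sub_of_le (Nat.zero_le s)]
  simp only [zero_add, tsub_zero]
  split_ifs
  · field_simp
    ring
  · ring

-- Both pairs of levels have the same sum, so the pairs of vertices on distinct arms cancel.
lemma toBilin'_spiderA_radialVec_succ_sub (hk : k ≠ 0) (d : ℕ) (r : ℝ) {t : ℕ} (ht : t + 2 ≤ l) :
    toBilin' (spiderA k l d) (radialVec k l r (t + 1)) (radialVec k l r (t + 1)) -
        toBilin' (spiderA k l d) (radialVec k l r t) (radialVec k l r (t + 2)) =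
      r ^ 2 / k * ((if d = 0 then 1 else 0) - (if d = 2 then 1 else 0)) * (r ^ 2) ^ t := by
  rw [toBilin'_spiderA_radialVec hk d r (by omega) (by omega),
    toBilin'_spiderA_radialVec hk d r (by omega) ht, Nat.dist_self,
    Nat.dist_eq_sub_of_le (Nat.le_add_right t 2), Nat.add_sub_cancel_left,
    show t + 1 + (t + 1) = t + (t + 2) by ring]
  ring

end RadialVec

section Telescope

variable {k n : ℕ} {r w : ℝ}

lemma sum_toBilin'_spiderA_radialVec_succ_sub (hk : k ≠ 0) (hr : r ^ (2 * (n + 1)) = k)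
    (hw : k * w = ∑ t ∈ range n, (r ^ 2) ^ t) (d : ℕ) :
    ∑ t ∈ range (n + 1),
      (toBilin' (spiderA k (n + 1) d) (radialVec k (n + 1) r (t + 1))
          (radialVec k (n + 1) r (t + 1)) -
        toBilin' (spiderA k (n + 1) d) (radialVec k (n + 1) r t) (radialVec k (n + 1) r (t + 2))) =
      r ^ 2 * w * ((if d = 0 then 1 else 0) - (if d = 2 then 1 else 0)) +
        ((if d = 0 then 1 else 0) + (k - 1) * (if d = 2 * (n + 1) then 1 else 0)) := by
  have hk' : (k : ℝ) ≠ 0 := Nat.cast_ne_zero.mpr hk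
  have last_term :
      toBilin' (spiderA k (n + 1) d) (radialVec k (n + 1) r (n + 1))
        (radialVec k (n + 1) r (n + 1)) =
      (if d = 0 then 1 else 0) + (k - 1) * (if d = 2 * (n + 1) then 1 else 0) := by
    rw [toBilin'_spiderA_radialVec hk d r le_rfl le_rfl, ← two_mul, hr, div_self hk', one_mul,
      Nat.dist_self]
  rw [sum_range_succ, sum_congr rfl fun t ht => toBilin'_spiderA_radialVec_succ_sub hk d r
      (Nat.succ_le_succ (mem_range.mp ht)),
    ← mul_sum, ← hw, last_term, radialVec_eq_zero k r (Nat.lt_succ_self (n + 1)), map_zero]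
  field_simp
  ring

lemma frob_chainGram_radialVec (hk : k ≠ 0) (hr : r ^ (2 * (n + 1)) = k)
    (hw : k * w = ∑ t ∈ range n, (r ^ 2) ^ t) (d : ℕ) :
    frob (chainGram (radialVec k (n + 1) r) (n + 1) w) (spiderA k (n + 1) d) =
      (if d = 0 then 3 / 2 + r ^ 2 * w / 2 + (1 - w) ^ 2 / 4 else 0) + (if d = 1 then r else 0) +
        (if d = 2 * (n + 1) then ((k : ℝ) - 1) / 2 else 0) := by
  have cross_two : w / 2 * toBilin' (spiderA k (n + 1) d) (radialVec k (n + 1) r 0)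
      (radialVec k (n + 1) r 2) = w / 2 * if d = 2 then r ^ 2 else 0 := by
    rcases n.eq_zero_or_pos with rfl | hn
    · have w_eq_zero : w = 0 := by simpa [hk] using hw
      rw [w_eq_zero, zero_div, zero_mul, zero_mul]
    · rw [toBilin'_spiderA_radialVec_zero hk d r (by omega)]
  rw [frob_chainGram (isSymm_spiderA k (n + 1) d) (radialVec_eq_zero k r (by omega))
      (radialVec_eq_zero k r (by omega)), sum_toBilin'_spiderA_radialVec_succ_sub hk hr hw,
    toBilin'_spiderA_radialVec_zero hk d r (Nat.le_add_left 1 n),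
    toBilin'_spiderA_radialVec_zero hk d r (Nat.zero_le _), cross_two]
  simp only [pow_zero, pow_one]
  split_ifs <;> ring

end Telescope

lemma mul_geom_sum_div_pow_le_half {q : ℝ} (hq : 3 ≤ q) (n : ℕ) :
    q * ((∑ t ∈ range n, q ^ t) / q ^ (n + 1)) ≤ 1 / 2 := by
  have : 0 < q := by linarith
  have sum_nonneg : 0 ≤ ∑ t ∈ range n, q ^ t := sum_nonneg fun t _ => by positivity
  have two_mul_le : 2 * ∑ t ∈ range n, q ^ t ≤ q ^ n :=
    calc 2 * ∑ t ∈ range n, q ^ t ≤ (q - 1) * ∑ t ∈ range n, q ^ t := by gcongr; linarith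
      _ = q ^ n - 1 := mul_geom_sum q n
      _ ≤ q ^ n := sub_le_self _ zero_le_one
  calc q * ((∑ t ∈ range n, q ^ t) / q ^ (n + 1)) = (∑ t ∈ range n, q ^ t) / q ^ n := by
        rw [pow_succ]
        field_simp
    _ ≤ 1 / 2 := by rw [div_le_div_iff₀ (by positivity) two_pos]; linarith

lemma add_mul_add_one_sub_sq_mem_Icc {q w : ℝ} (hq : 1 / 2 ≤ q) (hw : 0 ≤ w) (hqw : q * w ≤ 1 / 2) :
    3 / 2 + q * w / 2 + (1 - w) ^ 2 / 4 ∈ Set.Icc (3 / 2) 2 := by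
  have q_pos : 0 < q := by linarith
  have w_le_one : w ≤ 1 := by nlinarith
  have one_sub_sq_le : (1 - w) ^ 2 ≤ 1 := pow_le_one₀ (by linarith) (by linarith)
  exact ⟨by linarith [mul_nonneg q_pos.le hw, sq_nonneg (1 - w)], by linarith⟩

theorem spider_technical_cor (k l : ℕ) (hl : 1 ≤ l) (hk : 3 ^ l ≤ k) :
    ∃ Ψ : Matrix (Spider k l) (Spider k l) ℝ, Ψ.PosSemidef ∧
      (3 / 2 ≤ frob Ψ (spiderA k l 0) ∧ frob Ψ (spiderA k l 0) ≤ 2) ∧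
      frob Ψ (spiderA k l 1) = (k : ℝ) ^ ((1 : ℝ) / (2 * (l : ℝ))) ∧
      (∀ d : ℕ, 1 < d → d < 2 * l → frob Ψ (spiderA k l d) = 0) ∧
      frob Ψ (spiderA k l (2 * l)) = ((k : ℝ) - 1) / 2 := by
  obtain ⟨n, rfl⟩ := Nat.exists_eq_add_of_le' hl
  have k_pos : 0 < k := (pow_pos three_pos _).trans_le hk
  set r : ℝ := (k : ℝ) ^ ((1 : ℝ) / (2 * ((n + 1 : ℕ) : ℝ)))
  have r_pow : r ^ (2 * (n + 1)) = k := by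
    simpa [r] using Real.rpow_inv_natCast_pow k.cast_nonneg (n := 2 * (n + 1)) (by omega)
  have three_le : 3 ≤ r ^ 2 := le_of_pow_le_pow_left₀ n.succ_ne_zero (sq_nonneg r) <| by
    rw [← pow_mul, r_pow]; exact_mod_cast hk
  set w : ℝ := (∑ t ∈ range n, (r ^ 2) ^ t) / k
  have hw : k * w = ∑ t ∈ range n, (r ^ 2) ^ t := mul_div_cancel₀ _ (by positivity)
  have w_nonneg : 0 ≤ w := by positivity
  have w_le : r ^ 2 * w ≤ 1 / 2 := by
    have sum_div_le := mul_geom_sum_div_pow_le_half three_le n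
    rwa [← pow_mul, r_pow] at sum_div_le
  have frob_eq := frob_chainGram_radialVec k_pos.ne' r_pow hw
  refine ⟨_, posSemidef_chainGram (radialVec k (n + 1) r) (n + 1) w, ?_, ?_, fun d hd hd' => ?_, ?_⟩
  · simpa [frob_eq] using add_mul_add_one_sub_sq_mem_Icc (by linarith) w_nonneg w_le
  · simp [frob_eq, show 1 ≠ 2 * (n + 1) by omega]
  · simp [frob_eq, show d ≠ 0 by omega, hd.ne', hd'.ne]
  · simp [frob_eq, show 2 * (n + 1) ≠ 1 by omega]
end

section
/- For every matrix M ∈ ℝ^{V×V}, the symmetric matrix π_*^{−1/2}·‖M‖·Π − (1/2)(ΠM + MᵀΠ) is a 2-local sum of PSD matrices, where ‖M‖ denotes the ℓ²→ℓ² operator norm (spectral norm) of M. (This expresses that the 2-local, degree-2 static sum-of-squares proof system can derive the inequality Σ_{u,v} π(u) M_{uv} X_u X_v ≤ π_*^{−1/2}‖M‖·Σ_u π(u) X_u².) -/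
section WeightedGraph

variable {V : Type*} [Fintype V] [DecidableEq V] [Nonempty V]

/-- The (weighted) degree `deg(u) = ∑_v A_{uv}` of a weighted graph `A`. -/
noncomputable def gdeg (A : Matrix V V ℝ) (u : V) : ℝ := ∑ v, A u v

/-- The total weight `m = ∑_u deg(u)`. -/
noncomputable def gm (A : Matrix V V ℝ) : ℝ := ∑ u, gdeg A u

/-- The stationary distribution `π(u) = deg(u)/m` of the random walk on `A`. -/
noncomputable def gpi (A : Matrix V V ℝ) (u : V) : ℝ := gdeg A u / gm A

/-- `π_* = min_u π(u)`. -/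
noncomputable def gpiStar (A : Matrix V V ℝ) : ℝ :=
  Finset.univ.inf' Finset.univ_nonempty (gpi A)

/-- The random-walk transition matrix `K = D⁻¹A`, i.e. `K_{uv} = A_{uv}/deg(u)`. -/
noncomputable def gK (A : Matrix V V ℝ) : Matrix V V ℝ :=
  Matrix.of fun u v => A u v / gdeg A u

/-- The `ℓ² → ℓ²` operator norm (spectral norm) of a real square matrix. -/
noncomputable def l2opNorm (M : Matrix V V ℝ) : ℝ :=
  ‖Matrix.toEuclideanCLM (𝕜 := ℝ) M‖

/-- A symmetric matrix `M` is an `R`-local sum of PSD matrices if it is a finite sum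
`M = ∑ i, M_i` of positive semidefinite matrices, each supported on a set `S_i` of at
most `R` rows/columns.  This is exactly derivability of `xᵀMx ≥ 0` in the `R`-local,
degree-2 static sum-of-squares proof system. -/
def IsLocalPSDSum (R : ℕ) (M : Matrix V V ℝ) : Prop :=
  ∃ (n : ℕ) (Ms : Fin n → Matrix V V ℝ) (Ss : Fin n → Finset V),
    M = ∑ i, Ms i ∧ (∀ i, (Ms i).PosSemidef) ∧ (∀ i, (Ss i).card ≤ R) ∧
    (∀ i u v, Ms i u v ≠ 0 → u ∈ Ss i ∧ v ∈ Ss i)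

end WeightedGraph

/-!
Put `s = √π_* ‖M‖`. Weighted AM-GM,
`π(u) M_{uv} X_u X_v ≤ π(u) M_{uv}² / (2s) · X_u² + π(u) s / 2 · X_v²`,
splits each cross term, and the gap between its two sides is a positive semidefinite form in `X_u`
and `X_v` alone. Summed over all pairs, the coefficient of `X_w²` on the right is
`π(w) ∑_v M_{wv}² / (2s) + (∑_u π(u)) s / 2`. Each of the two terms is at most half of
`π(w) ‖M‖ / √π_*`, the first because a row of `M` has `ℓ²` norm at most `‖M‖`, the second because
`∑_u π(u) = 1 ≤ π(w) / π_*`.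
-/

open Matrix

namespace IsLocalPSDSum

variable {V : Type*} {R : ℕ} {M N : Matrix V V ℝ}

lemma of_posSemidef (hM : M.PosSemidef) {S : Finset V} (hS : S.card ≤ R)
    (hsupp : ∀ u v, M u v ≠ 0 → u ∈ S ∧ v ∈ S) : IsLocalPSDSum R M :=
  ⟨1, fun _ => M, fun _ => S, by simp, fun _ => hM, fun _ => hS, fun _ => hsupp⟩

lemma zero : IsLocalPSDSum R (0 : Matrix V V ℝ) :=
  of_posSemidef .zero (S := ∅) (by simp) (by simp)

lemma add (hM : IsLocalPSDSum R M) (hN : IsLocalPSDSum R N) : IsLocalPSDSum R (M + N) := by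
  obtain ⟨m, Ms, Ss, rfl, hMs, hSs, hMsupp⟩ := hM
  obtain ⟨n, Ns, Ts, rfl, hNs, hTs, hNsupp⟩ := hN
  refine ⟨m + n, Fin.append Ms Ns, Fin.append Ss Ts, by simp [Fin.sum_univ_add], ?_, ?_, ?_⟩ <;>
    refine Fin.addCases (fun i => ?_) (fun i => ?_) <;>
    simp only [Fin.append_left, Fin.append_right]
  exacts [hMs i, hNs i, hSs i, hTs i, hMsupp i, hNsupp i]

lemma sum {ι : Type*} {s : Finset ι} {Ms : ι → Matrix V V ℝ}
    (h : ∀ i ∈ s, IsLocalPSDSum R (Ms i)) : IsLocalPSDSum R (∑ i ∈ s, Ms i) :=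
  Finset.sum_induction Ms (IsLocalPSDSum R) (fun _ _ => add) zero h

lemma diagonal [Finite V] [DecidableEq V] (hR : 1 ≤ R) {d : V → ℝ} (hd : ∀ u, 0 ≤ d u) :
    IsLocalPSDSum R (diagonal d) := by
  cases nonempty_fintype V
  rw [← sum_single_eq_diagonal]
  refine .sum fun u _ => .of_posSemidef (S := {u}) ?_ (by simpa using hR) ?_
  · rw [← diagonal_single]
    exact .diagonal (Pi.single_nonneg.2 (hd u))
  · intro p q h
    obtain ⟨⟨rfl, rfl⟩, -⟩ : (u = p ∧ u = q) ∧ ¬ d u = 0 := by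
      simpa [single_apply, and_assoc] using h
    simp

end IsLocalPSDSum

section StationaryDistribution

variable {V : Type*} [Fintype V] {A : Matrix V V ℝ}

lemma gm_pos [Nonempty V] (hdeg : ∀ u, 0 < gdeg A u) : 0 < gm A :=
  Finset.sum_pos (fun u _ => hdeg u) Finset.univ_nonempty

lemma gpi_pos (hdeg : ∀ u, 0 < gdeg A u) (u : V) : 0 < gpi A u :=
  haveI : Nonempty V := ⟨u⟩
  div_pos (hdeg u) (gm_pos hdeg)

lemma sum_gpi (hm : gm A ≠ 0) : ∑ u, gpi A u = 1 := by
  simp only [gpi, ← Finset.sum_div]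
  exact div_self hm

lemma gpiStar_pos [Nonempty V] (hdeg : ∀ u, 0 < gdeg A u) : 0 < gpiStar A :=
  (Finset.lt_inf'_iff _).2 fun u _ => gpi_pos hdeg u

lemma gpiStar_le [Nonempty V] (A : Matrix V V ℝ) (u : V) : gpiStar A ≤ gpi A u :=
  Finset.inf'_le _ (Finset.mem_univ u)

end StationaryDistribution

open scoped Matrix.Norms.L2Operator in
lemma sum_norm_sq_row_le_l2_opNorm_sq {𝕜 m n : Type*} [RCLike 𝕜] [Fintype m] [Fintype n]
    [DecidableEq n] (M : Matrix m n 𝕜) (i : m) : ∑ j, ‖M i j‖ ^ 2 ≤ ‖M‖ ^ 2 := by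
  classical
  have h := l2_opNorm_mulVec Mᴴ (EuclideanSpace.single i 1)
  rw [l2_opNorm_conjTranspose, PiLp.norm_single, norm_one, mul_one] at h
  simpa [EuclideanSpace.norm_sq_eq] using pow_le_pow_left₀ (norm_nonneg _) h 2

lemma sum_sq_row_le_l2opNorm_sq {V : Type*} [Fintype V] [DecidableEq V] (M : Matrix V V ℝ)
    (u : V) : ∑ v, M u v ^ 2 ≤ l2opNorm M ^ 2 := by
  simpa [l2opNorm, l2_opNorm_toEuclideanCLM] using sum_norm_sq_row_le_l2_opNorm_sq M u

section LocalCauchySchwarz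

variable {V : Type*} [DecidableEq V]

lemma posSemidef_pair_of_sq_le_mul [Finite V] {a b c : ℝ} (ha : 0 ≤ a) (hb : 0 ≤ b)
    (hc : c ^ 2 ≤ a * b) (u v : V) :
    (single u u a + single v v b - (single u v c + single v u c)).PosSemidef := by
  cases nonempty_fintype V
  refine .of_dotProduct_mulVec_nonneg ?_ fun x => ?_
  · simp [IsHermitian, add_comm]
  have hform : star x ⬝ᵥ ((single u u a + single v v b - (single u v c + single v u c)) *ᵥ x) =
      a * x u ^ 2 + b * x v ^ 2 - 2 * c * (x u * x v) := by
    simp only [sub_mulVec, add_mulVec, single_mulVec_eq, dotProduct_sub, dotProduct_add,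
      dotProduct_smul, dotProduct_single, star_trivial, smul_eq_mul]
    ring
  rw [hform, sub_nonneg]
  refine le_of_sq_le_sq ?_ (by positivity)
  calc (2 * c * (x u * x v)) ^ 2 = 4 * c ^ 2 * (x u * x v) ^ 2 := by ring
    _ ≤ 4 * (a * b) * (x u * x v) ^ 2 := by gcongr
    _ ≤ (a * x u ^ 2 + b * x v ^ 2) ^ 2 := by
      linarith [sq_nonneg (a * x u ^ 2 - b * x v ^ 2)]

lemma isLocalPSDSum_pair_of_sq_le_mul [Finite V] {a b c : ℝ} (ha : 0 ≤ a) (hb : 0 ≤ b)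
    (hc : c ^ 2 ≤ a * b) (u v : V) :
    IsLocalPSDSum 2 (single u u a + single v v b - (single u v c + single v u c)) := by
  refine .of_posSemidef (posSemidef_pair_of_sq_le_mul ha hb hc u v) (S := {u, v})
    Finset.card_le_two fun p q h => ?_
  contrapose! h
  simp only [Finset.mem_insert, Finset.mem_singleton] at h
  simp only [Matrix.sub_apply, Matrix.add_apply, single_apply]
  grind

lemma isLocalPSDSum_diagonal_sub_add_transpose [Fintype V] {C : Matrix V V ℝ} {α β : V → V → ℝ}
    {d : V → ℝ} (hα : ∀ u v, 0 ≤ α u v) (hβ : ∀ u v, 0 ≤ β u v)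
    (hC : ∀ u v, C u v ^ 2 ≤ α u v * β u v) (hd : ∀ u, ∑ v, α u v + ∑ v, β v u ≤ d u) :
    IsLocalPSDSum 2 (diagonal d - (C + Cᵀ)) := by
  have hpairs : IsLocalPSDSum 2 (∑ u, ∑ v, (single u u (α u v) + single v v (β u v)
      - (single u v (C u v) + single v u (C u v)))) :=
    .sum fun u _ => .sum fun v _ => isLocalPSDSum_pair_of_sq_le_mul (hα u v) (hβ u v) (hC u v) u v
  have hslack : IsLocalPSDSum 2 (diagonal fun u => d u - (∑ v, α u v + ∑ v, β v u)) :=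
    .diagonal one_le_two fun u => sub_nonneg.2 (hd u)
  have hα_sum : ∑ u, ∑ v, single u u (α u v) = diagonal fun u => ∑ v, α u v := by
    rw [← sum_single_eq_diagonal]
    exact Finset.sum_congr rfl fun u _ => (map_sum (singleAddMonoidHom (α := ℝ) u u) _ _).symm
  have hβ_sum : ∑ u, ∑ v, single v v (β u v) = diagonal fun v => ∑ u, β u v := by
    rw [Finset.sum_comm, ← sum_single_eq_diagonal]
    exact Finset.sum_congr rfl fun v _ => (map_sum (singleAddMonoidHom (α := ℝ) v v) _ _).symm
  have hC_sum : ∑ u, ∑ v, single u v (C u v) = C := (matrix_eq_sum_single C).symm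
  have hCt_sum : ∑ u, ∑ v, single v u (C u v) = Cᵀ := by
    rw [Finset.sum_comm]
    exact (matrix_eq_sum_single Cᵀ).symm
  convert hpairs.add hslack using 1
  simp only [Finset.sum_add_distrib, Finset.sum_sub_distrib, hα_sum, hβ_sum, hC_sum, hCt_sum]
  rw [← diagonal_sub, ← diagonal_add]
  abel

-- At `s = 0` the quotient in `hd` is `0`, which is still the right weight because then `M = 0`.
lemma isLocalPSDSum_diagonal_sub_symm_diagonal_mul [Fintype V] {M : Matrix V V ℝ}
    {w d : V → ℝ} {s : ℝ} (hw : ∀ u, 0 ≤ w u) (hs : 0 ≤ s) (hM : s = 0 → M = 0)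
    (hd : ∀ u, w u * ((∑ v, M u v ^ 2) / s) / 2 + (∑ v, w v) * s / 2 ≤ d u) :
    IsLocalPSDSum 2 (diagonal d - (1 / 2 : ℝ) • (diagonal w * M + Mᵀ * diagonal w)) := by
  have hsym : (1 / 2 : ℝ) • (diagonal w * M + Mᵀ * diagonal w) =
      (1 / 2 : ℝ) • (diagonal w * M) + ((1 / 2 : ℝ) • (diagonal w * M))ᵀ := by
    simp
  rw [hsym]
  refine isLocalPSDSum_diagonal_sub_add_transpose
    (α := fun u v => w u * (M u v ^ 2 / s) / 2) (β := fun u _ => w u * s / 2)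
    (fun u v => ?_) (fun u _ => ?_) (fun u v => ?_) fun u => ?_
  · have := hw u
    positivity
  · have := hw u
    positivity
  · have hcancel : M u v ^ 2 / s * s = M u v ^ 2 :=
      div_mul_cancel_of_imp fun h => by simp [hM h]
    apply le_of_eq
    calc ((1 / 2 : ℝ) • (diagonal w * M)) u v ^ 2 = w u ^ 2 * (M u v ^ 2) / 4 := by
          rw [Matrix.smul_apply, diagonal_mul, smul_eq_mul]
          ring
      _ = w u ^ 2 * (M u v ^ 2 / s * s) / 4 := by rw [hcancel]
      _ = w u * (M u v ^ 2 / s) / 2 * (w u * s / 2) := by ring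
  · simpa only [Finset.sum_div, Finset.mul_sum, Finset.sum_mul] using hd u

theorem local_cauchy_schwarz_sos_general [Fintype V] (M : Matrix V V ℝ) {w : V → ℝ} {c N : ℝ}
    (hc : 0 < c) (hcw : ∀ u, c ≤ w u) (hw : ∑ u, w u ≤ 1) (hN : 0 ≤ N)
    (hM : ∀ u, ∑ v, M u v ^ 2 ≤ N ^ 2) :
    IsLocalPSDSum 2
      (((√c)⁻¹ * N) • diagonal w - (1 / 2 : ℝ) • (diagonal w * M + Mᵀ * diagonal w)) := by
  have hw0 u : 0 ≤ w u := hc.le.trans (hcw u)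
  have hM0 (h : √c * N = 0) : M = 0 := by
    ext u v
    have hN0 : N = 0 := (mul_eq_zero.1 h).resolve_left (Real.sqrt_pos.2 hc).ne'
    have hentry : M u v ^ 2 ≤ ∑ v, M u v ^ 2 :=
      Finset.single_le_sum (fun _ _ => sq_nonneg _) (Finset.mem_univ v)
    have hsq : M u v ^ 2 ≤ 0 := by simpa [hN0] using hentry.trans (hM u)
    exact (sq_nonpos_iff _).1 hsq
  rw [← diagonal_smul]
  refine isLocalPSDSum_diagonal_sub_symm_diagonal_mul hw0 (mul_nonneg (Real.sqrt_nonneg c) hN) hM0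
    fun u => ?_
  have hrow : w u * ((∑ v, M u v ^ 2) / (√c * N)) / 2 ≤ (√c)⁻¹ * N * w u / 2 :=
    calc w u * ((∑ v, M u v ^ 2) / (√c * N)) / 2 ≤ w u * (N ^ 2 / (√c * N)) / 2 := by
          have := hw0 u
          gcongr
          exact hM u
      _ = (√c)⁻¹ * (N * N / N) * w u / 2 := by ring
      _ = (√c)⁻¹ * N * w u / 2 := by rw [mul_self_div_self]
  have hcol : (∑ v, w v) * (√c * N) / 2 ≤ (√c)⁻¹ * N * w u / 2 :=
    calc (∑ v, w v) * (√c * N) / 2 ≤ 1 * (√c * N) / 2 := by gcongr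
      _ = (√c)⁻¹ * N * c / 2 := by
          rw [one_mul, mul_right_comm, inv_mul_eq_div, Real.div_sqrt]
      _ ≤ (√c)⁻¹ * N * w u / 2 := by
          gcongr
          exact hcw u
  simp only [Pi.smul_apply, smul_eq_mul]
  linarith

end LocalCauchySchwarz

theorem local_cauchy_schwarz_sos {V : Type*} [Fintype V] [DecidableEq V] [Nonempty V]
    (A : Matrix V V ℝ) (hA : A.IsSymm) (hA0 : ∀ u v, 0 ≤ A u v)
    (hrow : ∀ u, 0 < ∑ v, A u v)
    (M : Matrix V V ℝ) :
    IsLocalPSDSum 2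
      (((Real.sqrt (gpiStar A))⁻¹ * l2opNorm M) • Matrix.diagonal (gpi A)
        - (1 / 2 : ℝ) • (Matrix.diagonal (gpi A) * M + M.transpose * Matrix.diagonal (gpi A))) :=
  local_cauchy_schwarz_sos_general M (gpiStar_pos hrow) (gpiStar_le A)
    (sum_gpi (gm_pos hrow).ne').le (norm_nonneg _) (sum_sq_row_le_l2opNorm_sq M)
end
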